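/- For every graphon w:[0,1]²→[0,1] there exists a Robinson graphon u:[0,1]²→[0,1] such that ‖w−u‖_□ ≤ 14·Γ(w)^{1/7}. -/

import Mathlib

/-!
Above the diagonal, a Robinson graphon is nondecreasing in the first variable and nonincreasing in
the second. The quantity `Γ(w)` controls how far averages of `w` are from having this property:
for sets `S < S' < T' < T` of `[0,1]`, the average of `w` over `S × T` exceeds its average over
`S' × T'` by at most a multiple of `Γ(w)` (`compare`).

Cut `[0,1)` into `n` cells of length `1 / n`, and let `u(x, y)`, for `x < y`, be the supremum of the
averages of `w` over the products of two cells contained in `[0, x] × [y, 1]`. This `u` is Robinson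
by construction. By `compare`, the integral of `w` over a subrectangle of a block lies, up to an
error of order `n² Γ(w)`, between the extreme values of `u` near that block times the area of the
rectangle (`lower`, `upper`). Since `u` is monotone, the sum of its oscillations over all `n²`
blocks telescopes to `O(n)` instead of `O(n²)` (`sum_gap`). Adding up the blocks gives
`‖w - u‖_□ ≤ 9 / n + 2 n⁴ Γ(w)` (`cut_bound`).

For `Γ(w) > 0` take `n = ⌈Γ(w)^{-1/7}⌉`. For `Γ(w) = 0` a single `u` has to work for every `n`, so the
supremum runs over the cells of all scales at once; the comparison is then exact and
`‖w - u‖_□ ≤ 9 / n` for all `n`. To treat both cases together, the envelope depends on a set `N` of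
admissible scales.
-/

open MeasureTheory Set

/-- The cut norm of a kernel `w` on `[0,1]²`. -/
noncomputable def cutNorm (w : ℝ → ℝ → ℝ) : ℝ :=
  sSup {r : ℝ | ∃ S T : Set ℝ, MeasurableSet S ∧ MeasurableSet T ∧
    S ⊆ Icc 0 1 ∧ T ⊆ Icc 0 1 ∧ r = |∫ x in S, ∫ y in T, w x y|}

/-- `Γ(w, A)`. -/
noncomputable def gammaA (w : ℝ → ℝ → ℝ) (A : Set ℝ) : ℝ :=
  ∫ y in Icc (0:ℝ) 1, ∫ z in Icc (0:ℝ) 1,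
    if y < z then
      max (∫ x in A ∩ Icc 0 y, (w x z - w x y)) 0
        + max (∫ x in A ∩ Icc z 1, (w x y - w x z)) 0
    else 0

/-- `Γ(w) = sup { Γ(w,A) : A ⊆ [0,1] measurable }`. -/
noncomputable def Gamma (w : ℝ → ℝ → ℝ) : ℝ :=
  sSup {r : ℝ | ∃ A : Set ℝ, MeasurableSet A ∧ A ⊆ Icc 0 1 ∧ r = gammaA w A}

/-- A graphon: symmetric, measurable, `[0,1]`-valued on `[0,1]²`. -/
def IsGraphon (w : ℝ → ℝ → ℝ) : Prop :=
  Measurable (Function.uncurry w) ∧ (∀ x y, w x y = w y x) ∧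
    ∀ x y : ℝ, x ∈ Icc (0:ℝ) 1 → y ∈ Icc (0:ℝ) 1 → w x y ∈ Icc (0:ℝ) 1

/-- The Robinson property. -/
def IsRobinson (w : ℝ → ℝ → ℝ) : Prop :=
  ∀ x y z : ℝ, 0 ≤ x → x ≤ y → y ≤ z → z ≤ 1 → w x z ≤ min (w x y) (w y z)

/-! ### Integrals of kernels over rectangles -/

/-- The integral of a kernel over the rectangle `S × T`. -/
noncomputable def J (k : ℝ → ℝ → ℝ) (S T : Set ℝ) : ℝ := ∫ x in S, ∫ y in T, k x y

/-- A symmetric measurable kernel bounded by `1` in absolute value on the unit square. Its values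
off the square are arbitrary, so integrals are only ever taken over subsets of `[0,1]`. -/
structure Ker (k : ℝ → ℝ → ℝ) : Prop where
  meas : Measurable (Function.uncurry k)
  symm : ∀ x y, k x y = k y x
  bound : ∀ x ∈ Icc (0:ℝ) 1, ∀ y ∈ Icc (0:ℝ) 1, |k x y| ≤ 1

/-- A measurable subset of `[0,1]`. -/
structure Sub01 (S : Set ℝ) : Prop where
  meas : MeasurableSet S
  sub : S ⊆ Icc (0:ℝ) 1

namespace Sub01
variable {S T : Set ℝ}

lemma finite (hS : Sub01 S) : volume S < ⊤ :=
  lt_of_le_of_lt (measure_mono hS.sub) (by simp)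

lemma isFinite (hS : Sub01 S) : IsFiniteMeasure (volume.restrict S) :=
  ⟨by simpa using hS.finite⟩

lemma real_le (hS : Sub01 S) : volume.real S ≤ 1 := by
  have := measureReal_mono (μ := volume) hS.sub (by simp)
  simpa using this

lemma inter (hS : Sub01 S) (hT : MeasurableSet T) : Sub01 (S ∩ T) :=
  ⟨hS.meas.inter hT, inter_subset_left.trans hS.sub⟩

end Sub01

namespace Ker
variable {k k' : ℝ → ℝ → ℝ} {S T : Set ℝ}

lemma sub (hk : IsGraphon k) (hk' : IsGraphon k') : Ker (fun x y => k x y - k' x y) where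
  meas := hk.1.sub hk'.1
  symm x y := by rw [hk.2.1 x y, hk'.2.1 x y]
  bound x hx y hy := by
    have h1 := hk.2.2 x y hx hy
    have h2 := hk'.2.2 x y hx hy
    rw [abs_le]; constructor <;> linarith [h1.1, h1.2, h2.1, h2.2]

lemma of_graphon (hk : IsGraphon k) : Ker k where
  meas := hk.1
  symm := hk.2.1
  bound x hx y hy := by
    have h1 := hk.2.2 x y hx hy
    rw [abs_le]; constructor <;> linarith [h1.1, h1.2]

lemma integrable (hk : Ker k) (hS : Sub01 S) (hT : Sub01 T) :
    Integrable (Function.uncurry k) ((volume.restrict S).prod (volume.restrict T)) := by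
  have := hS.isFinite
  have := hT.isFinite
  refine Integrable.of_bound hk.meas.aestronglyMeasurable 1 ?_
  rw [Measure.prod_restrict]
  filter_upwards [ae_restrict_mem (hS.meas.prod hT.meas)] with p hp
  exact hk.bound _ (hS.sub hp.1) _ (hT.sub hp.2)

lemma integrable_inner (hk : Ker k) (hS : Sub01 S) (hT : Sub01 T) :
    IntegrableOn (fun x => ∫ y in T, k x y) S :=
  (hk.integrable hS hT).integral_prod_left

lemma integrable_row (hk : Ker k) {x : ℝ} (hx : x ∈ Icc (0:ℝ) 1) (hT : Sub01 T) :
    IntegrableOn (fun y => k x y) T := by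
  have := hT.isFinite
  refine Integrable.of_bound
    (hk.meas.comp (measurable_const.prodMk measurable_id)).aestronglyMeasurable 1 ?_
  filter_upwards [ae_restrict_mem hT.meas] with y hy
  exact hk.bound _ hx _ (hT.sub hy)

lemma J_symm (hk : Ker k) (hS : Sub01 S) (hT : Sub01 T) : J k S T = J k T S := by
  unfold J
  rw [integral_integral_swap (hk.integrable hS hT)]
  simp_rw [hk.symm]

lemma abs_J_le (hk : Ker k) (hS : Sub01 S) (hT : Sub01 T) :
    |J k S T| ≤ volume.real S * volume.real T := by
  have h : ∀ x ∈ S, ‖∫ y in T, k x y‖ ≤ volume.real T := fun x hx => by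
    simpa using norm_setIntegral_le_of_norm_le_const (f := fun y => k x y) (C := 1) hT.finite
      (fun y hy => hk.bound x (hS.sub hx) y (hT.sub hy))
  have := norm_setIntegral_le_of_norm_le_const hS.finite h
  rw [mul_comm]; exact this

lemma J_mono {l : ℝ → ℝ → ℝ} (hk : Ker k) (hl : Ker l) (hS : Sub01 S) (hT : Sub01 T)
    (h : ∀ x ∈ S, ∀ y ∈ T, k x y ≤ l x y) : J k S T ≤ J l S T := by
  refine setIntegral_mono_on (hk.integrable_inner hS hT) (hl.integrable_inner hS hT) hS.meas
    fun x hx => ?_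
  exact setIntegral_mono_on (hk.integrable_row (hS.sub hx) hT)
    (hl.integrable_row (hS.sub hx) hT) hT.meas (h x hx)

lemma const {c : ℝ} (h0 : 0 ≤ c) (h1 : c ≤ 1) : Ker (fun _ _ => c) where
  meas := measurable_const
  symm _ _ := rfl
  bound _ _ _ _ := by rw [abs_of_nonneg h0]; exact h1

lemma J_const (c : ℝ) : J (fun _ _ => c) S T = volume.real S * volume.real T * c := by
  simp [J, mul_assoc]

lemma J_sub (hk : Ker k) (hk' : Ker k') (hS : Sub01 S) (hT : Sub01 T) :
    J (fun x y => k x y - k' x y) S T = J k S T - J k' S T := by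
  unfold J
  rw [← integral_sub (hk.integrable_inner hS hT) (hk'.integrable_inner hS hT)]
  exact setIntegral_congr_fun hS.meas fun x hx =>
    integral_sub (hk.integrable_row (hS.sub hx) hT) (hk'.integrable_row (hS.sub hx) hT)

end Ker

lemma J_nonneg {w : ℝ → ℝ → ℝ} (hw : IsGraphon w) {S T : Set ℝ} (hS : Sub01 S) (hT : Sub01 T) :
    0 ≤ J w S T :=
  setIntegral_nonneg hS.meas fun x hx => setIntegral_nonneg hT.meas fun y hy =>
    (hw.2.2 x y (hS.sub hx) (hT.sub hy)).1

/-! ### Comparing averages by means of `Γ` -/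

section GammaBounds
variable {w : ℝ → ℝ → ℝ}

/-- The integrand of `gammaA w A` at the point `(y, z)`. -/
noncomputable def gammaIntegrand (w : ℝ → ℝ → ℝ) (A : Set ℝ) (y z : ℝ) : ℝ :=
  if y < z then
      max (∫ x in A ∩ Icc 0 y, (w x z - w x y)) 0
        + max (∫ x in A ∩ Icc z 1, (w x y - w x z)) 0
    else 0

lemma gammaIntegrand_nonneg (A : Set ℝ) (y z : ℝ) : 0 ≤ gammaIntegrand w A y z := by
  unfold gammaIntegrand; split_ifs <;> positivity

lemma gammaIntegrand_le (hw : IsGraphon w) {A : Set ℝ} (hA : Sub01 A) {y z : ℝ}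
    (hy : y ∈ Icc (0:ℝ) 1) (hz : z ∈ Icc (0:ℝ) 1) : gammaIntegrand w A y z ≤ 2 := by
  have key : ∀ B : Set ℝ, MeasurableSet B → ∀ y ∈ Icc (0:ℝ) 1, ∀ z ∈ Icc (0:ℝ) 1,
      ∫ x in A ∩ B, (w x z - w x y) ≤ 1 := by
    intro B hB y hy z hz
    have hAB := hA.inter hB
    have h := norm_setIntegral_le_of_norm_le_const (f := fun x => w x z - w x y) (C := 1)
      hAB.finite (fun x hx => by
        have h1 := hw.2.2 x y (hAB.sub hx) hy
        have h2 := hw.2.2 x z (hAB.sub hx) hz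
        rw [Real.norm_eq_abs, abs_le]; constructor <;> linarith [h1.1, h1.2, h2.1, h2.2])
    have := (abs_le.1 h).2
    linarith [hAB.real_le]
  unfold gammaIntegrand
  split_ifs
  · have h1 := max_le (key (Icc 0 y) measurableSet_Icc y hy z hz) zero_le_one
    have h2 := max_le (key (Icc z 1) measurableSet_Icc z hz y hy) zero_le_one
    linarith
  · norm_num

lemma measurable_gammaIntegrand (hw : IsGraphon w) {A : Set ℝ} (hA : Sub01 A) :
    Measurable (Function.uncurry (gammaIntegrand w A)) := by
  have key : ∀ f : ℝ × ℝ → ℝ → ℝ, Measurable (Function.uncurry f) → ∀ B : ℝ × ℝ → Set ℝ,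
      MeasurableSet {q : (ℝ × ℝ) × ℝ | q.2 ∈ B q.1} → (∀ p, MeasurableSet (B p)) →
      Measurable fun p => ∫ x in A ∩ B p, f p x := by
    intro f hf B hB hBp
    have : (fun p => ∫ x in A ∩ B p, f p x) =
        fun p => ∫ x, ({q : (ℝ × ℝ) × ℝ | q.2 ∈ A ∩ B q.1}.indicator (Function.uncurry f)) (p, x) := by
      funext p
      rw [← integral_indicator (hA.meas.inter (hBp p))]
      rfl
    rw [this]
    refine StronglyMeasurable.measurable (StronglyMeasurable.integral_prod_right' ?_)
    refine (hf.indicator ?_).stronglyMeasurable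
    exact (measurable_snd hA.meas).inter hB
  have hwf : ∀ a b : (ℝ × ℝ) × ℝ → ℝ, Measurable a → Measurable b →
      Measurable fun q => w (a q) (b q) := fun a b ha hb => hw.1.comp (ha.prodMk hb)
  have e : Function.uncurry (gammaIntegrand w A) = fun p : ℝ × ℝ => if p.1 < p.2 then
      max (∫ x in A ∩ Icc 0 p.1, (w x p.2 - w x p.1)) 0
        + max (∫ x in A ∩ Icc p.2 1, (w x p.1 - w x p.2)) 0
    else 0 := rfl
  rw [e]
  refine Measurable.ite (measurableSet_lt measurable_fst measurable_snd) ?_ measurable_const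
  refine Measurable.add (Measurable.max ?_ measurable_const) (Measurable.max ?_ measurable_const)
  · refine key (fun p x => w x p.2 - w x p.1) ?_ (fun p => Icc 0 p.1) ?_ (fun _ => measurableSet_Icc)
    · exact (hwf (fun q => q.2) (fun q => q.1.2) (by fun_prop) (by fun_prop)).sub
        (hwf (fun q => q.2) (fun q => q.1.1) (by fun_prop) (by fun_prop))
    · exact (measurableSet_le measurable_const measurable_snd).inter
        (measurableSet_le measurable_snd (by fun_prop))
  · refine key (fun p x => w x p.1 - w x p.2) ?_ (fun p => Icc p.2 1) ?_ (fun _ => measurableSet_Icc)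
    · exact (hwf (fun q => q.2) (fun q => q.1.1) (by fun_prop) (by fun_prop)).sub
        (hwf (fun q => q.2) (fun q => q.1.2) (by fun_prop) (by fun_prop))
    · exact (measurableSet_le (by fun_prop) measurable_snd).inter
        (measurableSet_le measurable_snd measurable_const)

lemma sub01_Icc : Sub01 (Icc 0 1) := ⟨measurableSet_Icc, subset_rfl⟩

lemma integrable_gammaIntegrand (hw : IsGraphon w) {A Y Z : Set ℝ} (hA : Sub01 A)
    (hY : Sub01 Y) (hZ : Sub01 Z) :
    Integrable (Function.uncurry (gammaIntegrand w A))
      ((volume.restrict Y).prod (volume.restrict Z)) := by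
  have := hY.isFinite
  have := hZ.isFinite
  refine Integrable.of_bound (measurable_gammaIntegrand hw hA).aestronglyMeasurable 2 ?_
  rw [Measure.prod_restrict]
  filter_upwards [ae_restrict_mem (hY.meas.prod hZ.meas)] with p hp
  rw [Real.norm_eq_abs, Function.uncurry_def, abs_of_nonneg (gammaIntegrand_nonneg _ _ _)]
  exact gammaIntegrand_le hw hA (hY.sub hp.1) (hZ.sub hp.2)

lemma gammaA_eq (A : Set ℝ) : gammaA w A = J (gammaIntegrand w A) (Icc 0 1) (Icc 0 1) := rfl

lemma gammaA_le (hw : IsGraphon w) {A : Set ℝ} (hA : Sub01 A) : gammaA w A ≤ Gamma w := by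
  refine le_csSup ⟨2, ?_⟩ ⟨A, hA.meas, hA.sub, rfl⟩
  rintro r ⟨A, hAm, hAs, rfl⟩
  have hA : Sub01 A := ⟨hAm, hAs⟩
  rw [gammaA_eq]
  have h : ∀ y ∈ Icc (0:ℝ) 1, ‖∫ z in Icc (0:ℝ) 1, gammaIntegrand w A y z‖ ≤ 2 := fun y hy => by
    simpa using norm_setIntegral_le_of_norm_le_const (f := fun z => gammaIntegrand w A y z) (C := 2)
      sub01_Icc.finite (fun z hz => by
        rw [Real.norm_eq_abs, abs_of_nonneg (gammaIntegrand_nonneg _ _ _)]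
        exact gammaIntegrand_le hw hA hy hz)
  have := norm_setIntegral_le_of_norm_le_const sub01_Icc.finite h
  have := (abs_le.1 this).2
  simpa [J] using this

lemma Gamma_nonneg (hw : IsGraphon w) : 0 ≤ Gamma w :=
  le_trans (integral_nonneg fun _ => integral_nonneg fun _ => gammaIntegrand_nonneg _ _ _)
    (gammaA_le hw sub01_Icc)

/-- If `f z - f y` is dominated by the integrand of `Γ(w, A)` on `Y × Z`, then the average of `f`
over `Z` exceeds its average over `Y` by at most `Γ(w) / (|Y| |Z|)`; denominators are cleared. -/
lemma integral_le_Gamma (hw : IsGraphon w) {A Y Z : Set ℝ} (hA : Sub01 A)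
    (hY : Sub01 Y) (hZ : Sub01 Z) {f : ℝ → ℝ}
    (hfY : IntegrableOn f Y) (hfZ : IntegrableOn f Z)
    (h : ∀ y ∈ Y, ∀ z ∈ Z, f z - f y ≤ gammaIntegrand w A y z) :
    volume.real Y * ∫ z in Z, f z ≤ volume.real Z * (∫ y in Y, f y) + Gamma w := by
  have := hY.isFinite
  have := hZ.isFinite
  have e : ∫ y in Y, ∫ z in Z, (f z - f y) =
      volume.real Y * (∫ z in Z, f z) - volume.real Z * ∫ y in Y, f y := by
    have : ∀ y, ∫ z in Z, (f z - f y) = (∫ z in Z, f z) - volume.real Z * f y := fun y => by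
      rw [integral_sub hfZ (integrable_const _)]; simp
    simp_rw [this]
    rw [integral_sub (integrable_const _) (hfY.const_mul _), integral_const_mul]; simp
  have i1 : IntegrableOn (fun y => ∫ z in Z, (f z - f y)) Y := by
    have : ∀ y, ∫ z in Z, (f z - f y) = (∫ z in Z, f z) - volume.real Z * f y := fun y => by
      rw [integral_sub hfZ (integrable_const _)]; simp
    simp_rw [this]
    exact (integrable_const _).sub (hfY.const_mul _)
  have row : ∀ T, Sub01 T → ∀ y ∈ Icc (0:ℝ) 1, IntegrableOn (gammaIntegrand w A y) T := by
    intro T hT y hy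
    have := hT.isFinite
    refine Integrable.of_bound ((measurable_gammaIntegrand hw hA).comp
      (measurable_const.prodMk measurable_id)).aestronglyMeasurable 2 ?_
    filter_upwards [ae_restrict_mem hT.meas] with z hz
    rw [Real.norm_eq_abs, abs_of_nonneg (gammaIntegrand_nonneg _ _ _)]
    exact gammaIntegrand_le hw hA hy (hT.sub hz)
  have s1 : ∫ y in Y, ∫ z in Z, (f z - f y) ≤ ∫ y in Y, ∫ z in Icc (0:ℝ) 1, gammaIntegrand w A y z := by
    refine setIntegral_mono_on i1 (integrable_gammaIntegrand hw hA hY sub01_Icc).integral_prod_left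
      hY.meas fun y hy => ?_
    refine le_trans (setIntegral_mono_on (hfZ.sub (integrable_const _))
      (row Z hZ y (hY.sub hy)) hZ.meas fun z hz => h y hy z hz) ?_
    exact setIntegral_mono_set (row _ sub01_Icc y (hY.sub hy))
      (Filter.Eventually.of_forall fun _ => gammaIntegrand_nonneg _ _ _) hZ.sub.eventuallyLE
  have s2 : ∫ y in Y, ∫ z in Icc (0:ℝ) 1, gammaIntegrand w A y z ≤ gammaA w A :=
    setIntegral_mono_set (integrable_gammaIntegrand hw hA sub01_Icc sub01_Icc).integral_prod_left
      (Filter.Eventually.of_forall fun _ => integral_nonneg fun _ => gammaIntegrand_nonneg _ _ _)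
      hY.sub.eventuallyLE
  have s3 := gammaA_le hw hA
  linarith

/-- For a set `A` to the left of `Y < Z`, the average of `w` over `A × Z` is at most its average
over `A × Y`, up to a multiple of `Γ(w)`. -/
lemma slide_right (hw : IsGraphon w) {A Y Z : Set ℝ} (hA : Sub01 A)
    (hY : Sub01 Y) (hZ : Sub01 Z) (hAY : ∀ a ∈ A, ∀ y ∈ Y, a ≤ y) (hYZ : ∀ y ∈ Y, ∀ z ∈ Z, y < z) :
    volume.real Y * J w A Z ≤ volume.real Z * J w A Y + Gamma w := by
  have hk := Ker.of_graphon hw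
  rw [hk.J_symm hA hZ, hk.J_symm hA hY]
  refine integral_le_Gamma hw hA hY hZ (hk.integrable_inner hY hA) (hk.integrable_inner hZ hA) ?_
  intro y hy z hz
  rw [← integral_sub (hk.integrable_row (hZ.sub hz) hA) (hk.integrable_row (hY.sub hy) hA)]
  have hAe : A ∩ Icc 0 y = A := inter_eq_left.2 fun a ha => ⟨(hA.sub ha).1, hAY a ha y hy⟩
  rw [gammaIntegrand, if_pos (hYZ y hy z hz), hAe]
  simp_rw [hw.2.1 z, hw.2.1 y]
  exact le_add_of_le_of_nonneg (le_max_left _ _) (le_max_right _ _)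

/-- For a set `A` to the right of `Y < Z`, the average of `w` over `Y × A` is at most its average
over `Z × A`, up to a multiple of `Γ(w)`. -/
lemma slide_left (hw : IsGraphon w) {A Y Z : Set ℝ} (hA : Sub01 A)
    (hY : Sub01 Y) (hZ : Sub01 Z) (hAZ : ∀ a ∈ A, ∀ z ∈ Z, z ≤ a) (hYZ : ∀ y ∈ Y, ∀ z ∈ Z, y < z) :
    volume.real Z * J w Y A ≤ volume.real Y * J w Z A + Gamma w := by
  have hk := Ker.of_graphon hw
  have := integral_le_Gamma hw hA hY hZ (f := fun y => - ∫ x in A, w y x)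
    (hk.integrable_inner hY hA).neg (hk.integrable_inner hZ hA).neg ?_
  · simp only [integral_neg] at this
    change _ * -J w Z A ≤ _ * -J w Y A + _ at this
    linarith
  intro y hy z hz
  rw [neg_sub_neg, ← integral_sub (hk.integrable_row (hY.sub hy) hA)
    (hk.integrable_row (hZ.sub hz) hA)]
  have hAe : A ∩ Icc z 1 = A := inter_eq_left.2 fun a ha => ⟨hAZ a ha z hz, (hA.sub ha).2⟩
  rw [gammaIntegrand, if_pos (hYZ y hy z hz), hAe]
  simp_rw [hw.2.1 z, hw.2.1 y]
  exact le_add_of_nonneg_of_le (le_max_right _ _) (le_max_left _ _)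

/-- For sets `S < S' < T' < T`, the average of `w` over the outer rectangle `S × T` is at most its
average over the inner one `S' × T'`, up to a multiple of `Γ(w)`. It goes through `S × T'`. -/
lemma compare (hw : IsGraphon w) {S S' T T' : Set ℝ} (hS : Sub01 S) (hS' : Sub01 S')
    (hT : Sub01 T) (hT' : Sub01 T') (h1 : ∀ a ∈ S, ∀ b ∈ S', a < b)
    (h2 : ∀ a ∈ S', ∀ b ∈ T', a < b) (h3 : ∀ a ∈ T', ∀ b ∈ T, a < b)
    (h4 : ∀ a ∈ S, ∀ b ∈ T', a < b) :
    volume.real S' * volume.real T' * J w S T ≤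
      volume.real S * volume.real T * J w S' T' + 2 * Gamma w := by
  have a1 := slide_right hw hS hT' hT (fun a ha b hb => (h4 a ha b hb).le) h3
  have a2 := slide_left hw hT' hS hS' (fun a ha b hb => (h2 b hb a ha).le) h1
  have b1 := mul_le_mul_of_nonneg_left a1 (measureReal_nonneg (μ := volume) (s := S'))
  have b2 := mul_le_mul_of_nonneg_left a2 (measureReal_nonneg (μ := volume) (s := T))
  have c1 := mul_le_mul_of_nonneg_right hS'.real_le (Gamma_nonneg hw)
  have c2 := mul_le_mul_of_nonneg_right hT.real_le (Gamma_nonneg hw)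
  nlinarith

end GammaBounds

/-! ### The grid of cells -/

/-- The `i`-th of the `n` intervals of length `1 / n` into which `[0,1)` is cut. -/
def cell (n i : ℕ) : Set ℝ := Ico ((i:ℝ) / n) (((i:ℝ) + 1) / n)

lemma sub01_cell {n i : ℕ} (hi : i < n) : Sub01 (cell n i) := by
  refine ⟨measurableSet_Ico, fun x hx => ⟨le_trans (by positivity) hx.1, hx.2.le.trans ?_⟩⟩
  have hn : (0:ℝ) < n := by exact_mod_cast (Nat.zero_le i).trans_lt hi
  rw [div_le_one hn]; exact_mod_cast hi

lemma real_cell (n i : ℕ) : volume.real (cell n i) = 1 / n := by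
  rw [cell, Real.volume_real_Ico_of_le (by gcongr; linarith)]; ring

lemma cell_lt {m i n j : ℕ} (h : ((i:ℝ) + 1) / m ≤ (j:ℝ) / n) :
    ∀ a ∈ cell m i, ∀ b ∈ cell n j, a < b :=
  fun _ ha _ hb => ha.2.trans_le (h.trans hb.1)

lemma cell_lt' {n i j : ℕ} (h : i < j) : ∀ a ∈ cell n i, ∀ b ∈ cell n j, a < b :=
  cell_lt (by gcongr; exact_mod_cast h)

lemma iUnion_cell {n : ℕ} (hn : 0 < n) : ⋃ i ∈ Finset.range n, cell n i = Ico 0 1 := by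
  have hn' : (0:ℝ) < n := by exact_mod_cast hn
  ext x
  simp only [mem_iUnion, Finset.mem_range, exists_prop]
  constructor
  · rintro ⟨i, hi, hx⟩
    refine ⟨le_trans (by positivity) hx.1, hx.2.trans_le ?_⟩
    rw [div_le_one hn']; exact_mod_cast hi
  · rintro ⟨h0, h1⟩
    have hx : 0 ≤ x * n := by positivity
    refine ⟨⌊x * n⌋₊, (Nat.floor_lt hx).2 (by nlinarith), ?_, ?_⟩
    · rw [div_le_iff₀ hn']; exact Nat.floor_le hx
    · rw [lt_div_iff₀ hn']; exact Nat.lt_floor_add_one _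

namespace Ker
variable {k : ℝ → ℝ → ℝ} {S T : Set ℝ}

lemma J_sum_left (hk : Ker k) (hS : Sub01 S) (hT : Sub01 T) {n : ℕ} (hn : 0 < n) :
    J k S T = ∑ i ∈ Finset.range n, J k (S ∩ cell n i) T := by
  have hc : ∀ i, MeasurableSet (cell n i) := fun i => measurableSet_Ico
  have h1 : (S : Set ℝ) =ᵐ[volume] ⋃ i ∈ Finset.range n, S ∩ cell n i := by
    rw [← inter_iUnion₂, iUnion_cell hn]
    have : (S ∩ Icc 0 1 : Set ℝ) =ᵐ[volume] (S ∩ Ico 0 1 : Set ℝ) :=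
      (Filter.EventuallyEq.refl _ _).inter Ico_ae_eq_Icc.symm
    rwa [inter_eq_left.2 hS.sub] at this
  unfold J
  rw [setIntegral_congr_set h1, integral_biUnion_finset _ (fun i _ => hS.meas.inter (hc i))]
  · intro i _ j _ hij
    refine Set.disjoint_left.2 fun x hx hx' => ?_
    rcases lt_or_gt_of_ne hij with h | h
    · exact lt_irrefl x (cell_lt' h x hx.2 x hx'.2)
    · exact lt_irrefl x (cell_lt' h x hx'.2 x hx.2)
  · exact fun i _ => hk.integrable_inner (hS.inter (hc i)) hT

lemma J_sum (hk : Ker k) (hS : Sub01 S) (hT : Sub01 T) {n : ℕ} (hn : 0 < n) :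
    J k S T = ∑ i ∈ Finset.range n, ∑ j ∈ Finset.range n, J k (S ∩ cell n i) (T ∩ cell n j) := by
  have hc : ∀ i, MeasurableSet (cell n i) := fun i => measurableSet_Ico
  rw [hk.J_sum_left hS hT hn]
  refine Finset.sum_congr rfl fun i _ => ?_
  rw [hk.J_symm (hS.inter (hc i)) hT, hk.J_sum_left hT (hS.inter (hc i)) hn]
  exact Finset.sum_congr rfl fun j _ => hk.J_symm (hT.inter (hc j)) (hS.inter (hc i))

end Ker

/-! ### The monotone envelope of the cell averages -/

section Envelope

open Classical in
/-- For `q = (m, a, b)` with `m ∈ N` and `a < b < m`: the average of `w` over `cell m a × cell m b`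
if this rectangle lies in the quadrant `(-∞, x] × [y, ∞)`, and `0` otherwise. -/
noncomputable def cellTerm (N : Set ℕ) (w : ℝ → ℝ → ℝ) (q : ℕ × ℕ × ℕ) (x y : ℝ) : ℝ :=
  if (q.1 ∈ N ∧ q.2.1 < q.2.2 ∧ q.2.2 < q.1) ∧
      (((q.2.1:ℝ) + 1) / q.1 ≤ x ∧ y ≤ (q.2.2:ℝ) / q.1) then
    (q.1:ℝ) ^ 2 * J w (cell q.1 q.2.1) (cell q.1 q.2.2) else 0

/-- The least monotone majorant of the cell averages at scales in `N`: for `x < y`, the supremum of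
the averages of `w` over cell rectangles in `(-∞, x] × [y, ∞)`, or `0` if there are none. On and
below the diagonal it is `1`, which keeps it monotone on the whole plane. -/
noncomputable def env (N : Set ℕ) (w : ℝ → ℝ → ℝ) (x y : ℝ) : ℝ :=
  if y ≤ x then 1 else ⨆ q, cellTerm N w q x y

variable {N : Set ℕ} {w : ℝ → ℝ → ℝ}

lemma term_nonneg (hw : IsGraphon w) (q x y) : 0 ≤ cellTerm N w q x y := by
  unfold cellTerm
  split_ifs with h
  · have := J_nonneg hw (sub01_cell (h.1.2.1.trans h.1.2.2)) (sub01_cell h.1.2.2)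
    positivity
  · rfl

lemma term_le_one (hw : IsGraphon w) (q x y) : cellTerm N w q x y ≤ 1 := by
  unfold cellTerm
  split_ifs with h
  · have := (Ker.of_graphon hw).abs_J_le (sub01_cell (h.1.2.1.trans h.1.2.2)) (sub01_cell h.1.2.2)
    rw [real_cell, real_cell] at this
    have hn : (0:ℝ) < q.1 := by exact_mod_cast (Nat.zero_le _).trans_lt h.1.2.2
    calc _ ≤ (q.1:ℝ) ^ 2 * (1 / q.1 * (1 / q.1)) := by gcongr; exact (le_abs_self _).trans this
      _ = 1 := by field_simp
  · exact zero_le_one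

lemma term_mono (hw : IsGraphon w) (q) {x x' y y' : ℝ} (hx : x ≤ x') (hy : y' ≤ y) :
    cellTerm N w q x y ≤ cellTerm N w q x' y' := by
  by_cases h : (q.1 ∈ N ∧ q.2.1 < q.2.2 ∧ q.2.2 < q.1) ∧
      (((q.2.1:ℝ) + 1) / q.1 ≤ x ∧ y ≤ (q.2.2:ℝ) / q.1)
  · have h' : (q.1 ∈ N ∧ q.2.1 < q.2.2 ∧ q.2.2 < q.1) ∧
      (((q.2.1:ℝ) + 1) / q.1 ≤ x' ∧ y' ≤ (q.2.2:ℝ) / q.1) :=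
      ⟨h.1, h.2.1.trans hx, hy.trans h.2.2⟩
    rw [cellTerm, cellTerm, if_pos h, if_pos h']
  · rw [cellTerm, if_neg h]; exact term_nonneg hw _ _ _

lemma bdd_term (hw : IsGraphon w) (x y) : BddAbove (range fun q => cellTerm N w q x y) :=
  ⟨1, by rintro _ ⟨q, rfl⟩; exact term_le_one hw q x y⟩

lemma env_nonneg (hw : IsGraphon w) (x y) : 0 ≤ env N w x y := by
  unfold env
  split_ifs
  · exact zero_le_one
  · exact Real.iSup_nonneg fun q => term_nonneg hw q x y

lemma env_le_one (hw : IsGraphon w) (x y) : env N w x y ≤ 1 := by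
  unfold env
  split_ifs
  · exact le_rfl
  · exact ciSup_le fun q => term_le_one hw q x y

lemma env_mono (hw : IsGraphon w) {x x' y y' : ℝ} (hx : x ≤ x') (hy : y' ≤ y) :
    env N w x y ≤ env N w x' y' := by
  by_cases h : y' ≤ x'
  · rw [env.eq_1 N w x', if_pos h]; exact env_le_one hw x y
  · have h2 : ¬ y ≤ x := fun h2 => h (hy.trans (h2.trans hx))
    rw [env, env, if_neg h, if_neg h2]
    exact ciSup_mono (bdd_term hw _ _) fun q => term_mono hw q hx hy

lemma measurable_env : Measurable (Function.uncurry (env N w)) := by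
  have e : Function.uncurry (env N w) =
      fun p : ℝ × ℝ => if p.2 ≤ p.1 then 1 else ⨆ q, cellTerm N w q p.1 p.2 := rfl
  rw [e]
  refine Measurable.ite (measurableSet_le measurable_snd measurable_fst) measurable_const ?_
  refine Measurable.iSup fun q => ?_
  unfold cellTerm
  refine Measurable.ite ?_ measurable_const measurable_const
  exact (MeasurableSet.const _).inter ((measurableSet_le measurable_const measurable_fst).inter
    (measurableSet_le measurable_snd measurable_const))

/-- The symmetrization of `env` from the region above the diagonal; the approximating graphon. -/
noncomputable def robinsonEnv (N : Set ℕ) (w : ℝ → ℝ → ℝ) (x y : ℝ) : ℝ :=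
  env N w (min x y) (max x y)

lemma isGraphon_robinsonEnv (hw : IsGraphon w) : IsGraphon (robinsonEnv N w) := by
  refine ⟨?_, fun x y => ?_, fun x y _ _ => ⟨env_nonneg hw _ _, env_le_one hw _ _⟩⟩
  · exact measurable_env.comp ((measurable_fst.min measurable_snd).prodMk
      (measurable_fst.max measurable_snd))
  · rw [robinsonEnv, robinsonEnv, min_comm, max_comm]

lemma isRobinson_robinsonEnv (hw : IsGraphon w) : IsRobinson (robinsonEnv N w) := by
  intro x y z _ hxy hyz _
  simp only [robinsonEnv, min_eq_left hxy, min_eq_left hyz, min_eq_left (hxy.trans hyz),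
    max_eq_right hxy, max_eq_right hyz, max_eq_right (hxy.trans hyz)]
  exact le_min (env_mono hw le_rfl hyz) (env_mono hw hxy le_rfl)

variable {δ : ℝ} {n i j : ℕ} {S T : Set ℝ}

/-- A cell rectangle competing in `env` at `(i / n, (j + 1) / n)` surrounds `cell n i × cell n j`
from outside, so by `compare` its average bounds the mean of `w` on `S × T` from below. -/
lemma lower (hw : IsGraphon w) (hδ0 : 0 ≤ δ) (hδ : ∀ m ∈ N, 2 * (m:ℝ) ^ 2 * Gamma w ≤ δ)
    (hij : i < j) (hS : Sub01 S) (hT : Sub01 T) (hSi : S ⊆ cell n i) (hTj : T ⊆ cell n j)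
    (hjn : j < n) :
    volume.real S * volume.real T * env N w ((i:ℝ) / n) (((j:ℝ) + 1) / n) ≤ J w S T + δ := by
  have hn : (0:ℝ) < n := by exact_mod_cast (Nat.zero_le j).trans_lt hjn
  have hlt : (i:ℝ) / n < ((j:ℝ) + 1) / n := by
    gcongr; have : (i:ℝ) < j := by exact_mod_cast hij
    linarith
  rw [env, if_neg hlt.not_ge, Real.mul_iSup_of_nonneg (by positivity)]
  refine ciSup_le fun q => ?_
  have hJ := J_nonneg hw hS hT
  obtain ⟨m, a, b⟩ := q
  unfold cellTerm
  split_ifs with h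
  · obtain ⟨⟨hm, hab, hbm⟩, hx, hy⟩ := h
    simp only at hm hab hbm hx hy ⊢
    have hm0 : (0:ℝ) < m := by exact_mod_cast (Nat.zero_le b).trans_lt hbm
    have hA := sub01_cell (hab.trans hbm)
    have hB := sub01_cell hbm
    have key := compare hw hA hS hB hT (fun p hp s hs => cell_lt hx p hp s (hSi hs))
      (fun s hs t ht => cell_lt' hij s (hSi hs) t (hTj ht))
      (fun t ht p hp => cell_lt hy t (hTj ht) p hp)
      (fun p hp t ht => (cell_lt hx p hp _ ⟨le_rfl, by gcongr; linarith⟩).trans_le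
        (le_trans (by gcongr) (hTj ht).1))
    rw [real_cell, real_cell] at key
    have h2 := mul_le_mul_of_nonneg_left key (sq_nonneg (m:ℝ))
    have e : (m:ℝ) ^ 2 * (1 / m * (1 / m) * J w S T + 2 * Gamma w) =
        J w S T + 2 * (m:ℝ) ^ 2 * Gamma w := by field_simp
    rw [e] at h2
    linarith [hδ m hm]
  · simp only [mul_zero]; positivity

/-- The cell rectangle `cell n (i + 1) × cell n (j - 1)` sits inside `S × T` in the sense of
`compare` and competes in `env` at `((i + 2) / n, (j - 1) / n)`. When the two cells are too close
for this, `env` equals `1` there and the bound is trivial. -/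
lemma upper (hw : IsGraphon w) (hδ0 : 0 ≤ δ) (hδ : ∀ m ∈ N, 2 * (m:ℝ) ^ 2 * Gamma w ≤ δ)
    (hnN : n ∈ N) (hS : Sub01 S) (hT : Sub01 T) (hSi : S ⊆ cell n i) (hTj : T ⊆ cell n j)
    (hjn : j < n) :
    J w S T ≤ volume.real S * volume.real T * env N w (((i:ℝ) + 2) / n) (((j:ℝ) - 1) / n) + δ := by
  have hn : (0:ℝ) < n := by exact_mod_cast (Nat.zero_le j).trans_lt hjn
  by_cases hfar : i + 3 < j
  · obtain ⟨j, rfl⟩ : ∃ j', j = j' + 1 := ⟨j - 1, by omega⟩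
    have hnot : ¬ (((j + 1 : ℕ):ℝ) - 1) / n ≤ ((i:ℝ) + 2) / n := by
      rw [not_le]; gcongr
      have : (i:ℝ) + 3 < (j + 1 : ℕ) := by exact_mod_cast hfar
      linarith
    have hA : Sub01 (cell n (i + 1)) := sub01_cell (by omega)
    have hB : Sub01 (cell n j) := sub01_cell (by omega)
    have hterm : (n:ℝ) ^ 2 * J w (cell n (i + 1)) (cell n j) ≤
        env N w (((i:ℝ) + 2) / n) ((((j + 1 : ℕ):ℝ) - 1) / n) := by
      rw [env, if_neg hnot]
      refine le_trans (le_of_eq ?_) (le_ciSup (bdd_term hw _ _) (n, i + 1, j))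
      rw [cellTerm, if_pos]
      refine ⟨⟨hnN, ?_, ?_⟩, ?_, ?_⟩ <;> simp only
      · omega
      · omega
      · exact le_of_eq (by push_cast; ring)
      · exact le_of_eq (by push_cast; ring)
    have key := compare hw hS hA hT hB (fun s hs p hp => cell_lt' (by omega) s (hSi hs) p hp)
      (cell_lt' (by omega)) (fun p hp t ht => cell_lt' (by omega) p hp t (hTj ht))
      (fun s hs p hp => cell_lt' (by omega) s (hSi hs) p hp)
    rw [real_cell, real_cell] at key
    have h2 := mul_le_mul_of_nonneg_left key (sq_nonneg (n:ℝ))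
    have e : (n:ℝ) ^ 2 * (1 / n * (1 / n) * J w S T) = J w S T := by field_simp
    rw [e] at h2
    have h3 := mul_le_mul_of_nonneg_left hterm
      (show 0 ≤ volume.real S * volume.real T by positivity)
    linarith [hδ n hnN]
  · have hle : ((j:ℝ) - 1) / n ≤ ((i:ℝ) + 2) / n := by
      gcongr
      have : (j:ℝ) ≤ i + 3 := by exact_mod_cast not_lt.1 hfar
      linarith
    rw [env, if_pos hle]
    have := (abs_le.1 ((Ker.of_graphon hw).abs_J_le hS hT)).2
    linarith

/-- The oscillation of `env` over a slightly enlarged block `(i, j)`, times the area of a block. -/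
noncomputable def gap (N : Set ℕ) (w : ℝ → ℝ → ℝ) (n i j : ℕ) : ℝ :=
  1 / (n:ℝ) ^ 2 * (env N w (((i:ℝ) + 2) / n) (((j:ℝ) - 1) / n) - env N w ((i:ℝ) / n) (((j:ℝ) + 1) / n))

lemma env_sub_nonneg (hw : IsGraphon w) (n i j : ℕ) :
    0 ≤ env N w (((i:ℝ) + 2) / n) (((j:ℝ) - 1) / n) - env N w ((i:ℝ) / n) (((j:ℝ) + 1) / n) := by
  refine sub_nonneg.2 (env_mono hw ?_ ?_) <;> gcongr <;> linarith

lemma gap_nonneg (hw : IsGraphon w) (n i j : ℕ) : 0 ≤ gap N w n i j :=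
  mul_nonneg (by positivity) (env_sub_nonneg hw n i j)

lemma area_le (hSi : S ⊆ cell n i) (hTj : T ⊆ cell n j) :
    volume.real S * volume.real T ≤ 1 / (n:ℝ) ^ 2 := by
  have h1 := measureReal_mono (μ := volume) hSi (by simp [cell])
  have h2 := measureReal_mono (μ := volume) hTj (by simp [cell])
  rw [real_cell] at h1 h2
  calc _ ≤ (1 / (n:ℝ)) * (1 / n) := by gcongr
    _ = _ := by ring

lemma block (hw : IsGraphon w) (hδ0 : 0 ≤ δ) (hδ : ∀ m ∈ N, 2 * (m:ℝ) ^ 2 * Gamma w ≤ δ)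
    (hnN : n ∈ N) (hij : i < j) (hjn : j < n)
    (hS : Sub01 S) (hT : Sub01 T) (hSi : S ⊆ cell n i) (hTj : T ⊆ cell n j) :
    |J (fun x y => w x y - robinsonEnv N w x y) S T| ≤ gap N w n i j + δ := by
  have hu := isGraphon_robinsonEnv (N := N) hw
  have kw := Ker.of_graphon hw
  have ku := Ker.of_graphon hu
  have hl := lower hw hδ0 hδ hij hS hT hSi hTj hjn
  have hh := upper hw hδ0 hδ hnN hS hT hSi hTj hjn
  have hue : ∀ x ∈ S, ∀ y ∈ T, robinsonEnv N w x y = env N w x y := fun x hx y hy => by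
    have := (cell_lt' hij x (hSi hx) y (hTj hy)).le
    rw [robinsonEnv, min_eq_left this, max_eq_right this]
  have u1 : volume.real S * volume.real T * env N w ((i:ℝ) / n) (((j:ℝ) + 1) / n) ≤
      J (robinsonEnv N w) S T := by
    rw [← Ker.J_const]
    refine Ker.J_mono (Ker.const (env_nonneg hw _ _) (env_le_one hw _ _)) ku hS hT ?_
    intro x hx y hy
    rw [hue x hx y hy]
    exact env_mono hw (hSi hx).1 (hTj hy).2.le
  have u2 : J (robinsonEnv N w) S T ≤
      volume.real S * volume.real T * env N w (((i:ℝ) + 2) / n) (((j:ℝ) - 1) / n) := by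
    rw [← Ker.J_const]
    refine Ker.J_mono ku (Ker.const (env_nonneg hw _ _) (env_le_one hw _ _)) hS hT ?_
    intro x hx y hy
    rw [hue x hx y hy]
    refine env_mono hw ((hSi hx).2.le.trans ?_) (le_trans ?_ (hTj hy).1) <;> gcongr <;> linarith
  have g : volume.real S * volume.real T * (env N w (((i:ℝ) + 2) / n) (((j:ℝ) - 1) / n) -
      env N w ((i:ℝ) / n) (((j:ℝ) + 1) / n)) ≤ gap N w n i j :=
    mul_le_mul_of_nonneg_right (area_le hSi hTj) (env_sub_nonneg hw n i j)
  rw [kw.J_sub ku hS hT, abs_le]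
  constructor <;> linarith

lemma sum_step_two (b : ℤ → ℝ) (n : ℕ) :
    ∑ i ∈ Finset.range n, (b (i + 2) - b i) = b (n + 1) + b n - b 1 - b 0 := by
  induction n with
  | zero => simp
  | succ n ih =>
    rw [Finset.sum_range_succ, ih]
    push_cast
    rw [show (n:ℤ) + 1 + 1 = n + 2 by ring]
    ring

/-- Monotonicity of `env` makes the oscillations telescope along rows and along columns. -/
lemma sum_gap (hw : IsGraphon w) (hn : 0 < n) :
    ∑ i ∈ Finset.range n, ∑ j ∈ Finset.range n, gap N w n i j ≤ 4 / n := by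
  have hn' : (0:ℝ) < n := by exact_mod_cast hn
  set h : ℤ → ℤ → ℝ := fun a b => env N w ((a:ℝ) / n) ((b:ℝ) / n) with hh
  have h0 : ∀ a b, 0 ≤ h a b := fun a b => env_nonneg hw _ _
  have h1 : ∀ a b, h a b ≤ 1 := fun a b => env_le_one hw _ _
  have e : ∀ i j : ℕ, gap N w n i j = 1 / (n:ℝ) ^ 2 *
      ((h (i + 2) (j + 2 - 1 - 2) - h (i + 2) (j + 2 - 1)) + (h (i + 2) (j + 1) - h i (j + 1))) := by
    intro i j
    rw [show (j:ℤ) + 2 - 1 = j + 1 by ring, show (j:ℤ) + 1 - 2 = j - 1 by ring]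
    simp only [hh, gap]; push_cast; ring
  have s1 : ∀ i : ℕ, ∑ j ∈ Finset.range n, (h (i + 2) (j + 2 - 1 - 2) - h (i + 2) (j + 2 - 1)) ≤ 2 := by
    intro i
    have := sum_step_two (fun c => - h (i + 2) (c - 1)) n
    have e2 : ∑ j ∈ Finset.range n, (h (i + 2) (j + 2 - 1 - 2) - h (i + 2) (j + 2 - 1)) =
        ∑ j ∈ Finset.range n, (- h (i + 2) ((j:ℤ) + 2 - 1) - - h (i + 2) (j - 1)) :=
      Finset.sum_congr rfl fun j _ => by
        rw [show (j:ℤ) + 2 - 1 - 2 = j - 1 by ring]; ring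
    rw [e2, this]
    linarith [h0 (i + 2) ((n:ℤ) + 1 - 1), h0 (i + 2) ((n:ℤ) - 1), h1 (i + 2) (1 - 1),
      h1 (i + 2) (0 - 1)]
  have s2 : ∀ j : ℕ, ∑ i ∈ Finset.range n, (h (i + 2) (j + 1) - h i (j + 1)) ≤ 2 := by
    intro j
    rw [sum_step_two (fun c => h c (j + 1)) n]
    linarith [h0 0 (j + 1), h0 1 (j + 1), h1 (n + 1) (j + 1), h1 n (j + 1)]
  simp_rw [e, ← Finset.mul_sum, Finset.sum_add_distrib]
  rw [Finset.sum_comm (f := fun i j : ℕ => h (i + 2) (j + 1) - h i (j + 1))]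
  have t1 := Finset.sum_le_card_nsmul (Finset.range n) _ 2 fun i _ => s1 i
  have t2 := Finset.sum_le_card_nsmul (Finset.range n) _ 2 fun j _ => s2 j
  simp only [Finset.card_range, nsmul_eq_mul] at t1 t2
  calc _ ≤ 1 / (n:ℝ) ^ 2 * (n * 2 + n * 2) := by gcongr
    _ = 4 / n := by field_simp; norm_num

/-- Each block above the diagonal contributes at most its `gap` plus `δ`, each block below it the
same by symmetry, and the diagonal blocks have total area `1 / n`. -/
lemma cut_bound (hw : IsGraphon w) (hδ0 : 0 ≤ δ) (hδ : ∀ m ∈ N, 2 * (m:ℝ) ^ 2 * Gamma w ≤ δ)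
    (hnN : n ∈ N) (hn : 0 < n) (hS : Sub01 S) (hT : Sub01 T) :
    |J (fun x y => w x y - robinsonEnv N w x y) S T| ≤ 9 / n + (n:ℝ) ^ 2 * δ := by
  have hn' : (0:ℝ) < n := by exact_mod_cast hn
  have kk := Ker.sub hw (isGraphon_robinsonEnv (N := N) hw)
  have hb : ∀ i ∈ Finset.range n, ∀ j ∈ Finset.range n,
      |J (fun x y => w x y - robinsonEnv N w x y) (S ∩ cell n i) (T ∩ cell n j)| ≤
        gap N w n i j + gap N w n j i + (if i = j then 1 / (n:ℝ) ^ 2 else 0) + δ := by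
    intro i hi j hj
    rw [Finset.mem_range] at hi hj
    have hSi : Sub01 (S ∩ cell n i) := hS.inter measurableSet_Ico
    have hTj : Sub01 (T ∩ cell n j) := hT.inter measurableSet_Ico
    have g1 := gap_nonneg (N := N) hw n i j
    have g2 := gap_nonneg (N := N) hw n j i
    rcases lt_trichotomy i j with h | h | h
    · have := block hw hδ0 hδ hnN h hj hSi hTj inter_subset_right inter_subset_right
      rw [if_neg h.ne]; linarith
    · have h1 := kk.abs_J_le hSi hTj
      have h2 : volume.real (S ∩ cell n i) * volume.real (T ∩ cell n j) ≤ _ :=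
        area_le inter_subset_right inter_subset_right
      rw [if_pos h]; linarith
    · rw [kk.J_symm hSi hTj]
      have := block hw hδ0 hδ hnN h hi hTj hSi inter_subset_right inter_subset_right
      rw [if_neg h.ne']; linarith
  rw [kk.J_sum hS hT hn]
  refine (Finset.abs_sum_le_sum_abs _ _).trans ?_
  refine (Finset.sum_le_sum fun i hi => (Finset.abs_sum_le_sum_abs _ _).trans
    (Finset.sum_le_sum fun j hj => hb i hi j hj)).trans ?_
  simp_rw [Finset.sum_add_distrib]
  rw [Finset.sum_comm (f := fun i j => gap N w n j i)]
  have hg := sum_gap (N := N) hw hn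
  have hd : ∑ i ∈ Finset.range n, ∑ j ∈ Finset.range n, (if i = j then 1 / (n:ℝ) ^ 2 else 0) =
      1 / (n:ℝ) := by
    have : ∀ i ∈ Finset.range n, ∑ j ∈ Finset.range n, (if i = j then 1 / (n:ℝ) ^ 2 else 0) =
        1 / (n:ℝ) ^ 2 := fun i hi => by rw [Finset.sum_ite_eq, if_pos hi]
    rw [Finset.sum_congr rfl this]
    simp; field_simp
  rw [hd]
  simp only [Finset.sum_const, Finset.card_range, nsmul_eq_mul]
  have : (9:ℝ) / n = 4 / n + 4 / n + 1 / n := by ring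
  nlinarith

end Envelope

/-! ### The choice of scale -/

lemma cutNorm_le {k : ℝ → ℝ → ℝ} {B : ℝ} (h : ∀ S T, Sub01 S → Sub01 T → |J k S T| ≤ B) :
    cutNorm k ≤ B := by
  refine csSup_le ⟨_, ∅, ∅, .empty, .empty, empty_subset _, empty_subset _, rfl⟩ ?_
  rintro r ⟨S, T, hS, hT, hS', hT', rfl⟩
  exact h S T ⟨hS, hS'⟩ ⟨hT, hT'⟩

/-- For every graphon `w` there is a Robinson graphon `u` with
`‖w - u‖_□ ≤ 14 Γ(w)^{1/7}`. -/
theorem robinson_approximation (w : ℝ → ℝ → ℝ) (hw : IsGraphon w) :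
    ∃ u : ℝ → ℝ → ℝ, IsGraphon u ∧ IsRobinson u ∧
      cutNorm (fun x y => w x y - u x y) ≤ 14 * Gamma w ^ ((1:ℝ)/7) := by
  have hΓ := Gamma_nonneg hw
  rcases hΓ.eq_or_lt with h0 | hpos
  -- With no error terms every scale may enter the envelope, so the bound `9 / n` holds for all `n`.
  · refine ⟨robinsonEnv univ w, isGraphon_robinsonEnv hw, isRobinson_robinsonEnv hw, ?_⟩
    rw [← h0, Real.zero_rpow (by norm_num), mul_zero]
    refine cutNorm_le fun S T hS hT => ?_
    have hlim : Filter.Tendsto (fun n : ℕ => (9:ℝ) / n) Filter.atTop (nhds 0) :=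
      tendsto_const_div_atTop_nhds_zero_nat 9
    refine ge_of_tendsto hlim ?_
    filter_upwards [Filter.eventually_gt_atTop 0] with n hn
    have := cut_bound (N := univ) (δ := 0) hw le_rfl (fun m _ => by simp [← h0]) (mem_univ n) hn hS hT
    simpa using this
  set g := Gamma w ^ ((1:ℝ)/7) with hg
  have hg0 : 0 < g := Real.rpow_pos_of_pos hpos _
  have hg7 : g ^ 7 = Gamma w := by
    rw [hg, ← Real.rpow_natCast, ← Real.rpow_mul hΓ]; norm_num
  -- The cut norm of `w` is at most `1`, so only small `g` needs an approximation.
  rcases le_or_gt 1 (14 * g) with hbig | hsmall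
  · refine ⟨fun _ _ => 0, ⟨measurable_const, fun _ _ => rfl, fun _ _ _ _ => by simp⟩,
      fun _ _ _ _ _ _ _ => by simp, ?_⟩
    refine le_trans (cutNorm_le fun S T hS hT => ?_) hbig
    simp only [sub_zero]
    refine ((Ker.of_graphon hw).abs_J_le hS hT).trans ?_
    exact mul_le_one₀ hS.real_le measureReal_nonneg hT.real_le
  · set n := ⌈1 / g⌉₊ with hn
    have hn1 : 1 / g ≤ n := Nat.le_ceil _
    have hn2 : (n:ℝ) < 1 / g + 1 := Nat.ceil_lt_add_one (by positivity)
    have hnpos : (0:ℝ) < n := lt_of_lt_of_le (by positivity) hn1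
    refine ⟨robinsonEnv {n} w, isGraphon_robinsonEnv hw, isRobinson_robinsonEnv hw, ?_⟩
    refine cutNorm_le fun S T hS hT => ?_
    have := cut_bound (N := {n}) (n := n) (δ := 2 * (n:ℝ) ^ 2 * Gamma w) hw (by positivity)
      (fun m hm => by rw [mem_singleton_iff.1 hm]) rfl (by exact_mod_cast hnpos) hS hT
    refine this.trans ?_
    have a1 : (9:ℝ) / n ≤ 9 * g := by
      rw [div_le_iff₀ hnpos]
      rw [div_le_iff₀ hg0] at hn1
      linarith
    have a2 : n * g ≤ 2 := by
      have : (n:ℝ) * g ≤ (1 / g + 1) * g := by gcongr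
      have e : (1 / g + 1) * g = 1 + g := by field_simp
      linarith
    have a3 : ((n:ℝ) * g) ^ 4 ≤ 2 ^ 4 := by gcongr
    have a4 : g ^ 2 ≤ (1 / 14) ^ 2 := by gcongr; linarith
    calc (9:ℝ) / n + (n:ℝ) ^ 2 * (2 * (n:ℝ) ^ 2 * Gamma w)
        = 9 / n + 2 * ((n * g) ^ 4 * g ^ 2 * g) := by rw [← hg7]; ring
      _ ≤ 9 * g + 2 * (2 ^ 4 * (1 / 14) ^ 2 * g) := by gcongr
      _ ≤ 14 * g := by linarith
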